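/- arXiv:0801.4786 — 3 statements merged into one kernel-verified Lean document; each statement's English description precedes it below -/
import Mathlib

section
/- Let n ≥ 2 and let p be a prime. For every i with 1 ≤ i ≤ n−2, the colored Burau pairs satisfy the adjacent braid relation in the semidirect product: g_i · g_{i+1} · g_i = g_{i+1} · g_i · g_{i+1} in GL(n,F) ⋊ S_n. -/
/-- `F` : the field of fractions of the multivariate polynomial ring over `𝔽_p = ZMod p`
in variables `t_1, …, t_n` (0-indexed as `X 0, …, X (n-1)`). -/
noncomputable abbrev BurauField (n p : ℕ) : Type :=
  FractionRing (MvPolynomial (Fin n) (ZMod p))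

/-- The variable `t_i` (1-based index `i`, so `tvar n p (i-1)` is `t_i`) viewed inside
the fraction field. -/
noncomputable def tvar (n p : ℕ) (k : ℕ) : BurauField n p :=
  if h : k < n then
    algebraMap (MvPolynomial (Fin n) (ZMod p)) (BurauField n p) (MvPolynomial.X ⟨k, h⟩)
  else 0

/-- The colored Burau matrix `x_i(t)` (1-based index `i` with `1 ≤ i ≤ n-1`):
the identity matrix except for the `i`-th row, which has entries `t_i, -t_i, 1`
in columns `i-1, i, i+1` (with `-t_i` on the diagonal); for `i = 1` the first row
is `(-t_1, 1, 0, …, 0)`. -/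
noncomputable def colBurau (n p : ℕ) (i : ℕ) : Matrix (Fin n) (Fin n) (BurauField n p) :=
  Matrix.of fun r c =>
    if (r : ℕ) + 1 = i then
      if (c : ℕ) + 1 = i then -(tvar n p (i - 1))
      else if (c : ℕ) = i then 1
      else if (c : ℕ) + 2 = i then tvar n p (i - 1)
      else 0
    else if r = c then 1 else 0

/-- The action of a permutation `s ∈ S_n` on the fraction field, permuting the
variables `t_1, …, t_n`. -/
noncomputable def permF (n p : ℕ) (s : Equiv.Perm (Fin n)) : BurauField n p ≃+* BurauField n p :=
  IsFractionRing.ringEquivOfRingEquiv (MvPolynomial.renameEquiv (ZMod p) s).toRingEquiv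

/-!
The colored Burau matrix `x_k` is a rank-one perturbation `1 + e_k wᵀ` of the identity, with
`w = t_k e_{k-1} - (1 + t_k) e_k + e_{k+1}`. The transpositions move the variables so that the
relation becomes `B_k(a) B_{k+1}(a) B_k(b) = B_{k+1}(b) B_k(a) B_{k+1}(a)`, where `B_k(u)` is `x_k`
with `t_k` replaced by `u`, `a = t_k` and `b = t_{k+1}`. After expansion, both sides agree by the
values of the row vectors `w` at `e_k` and `e_{k+1}`, and by the symmetry in `a` and `b` of
`w_{k+1}(a) + a w_k(b)`.
-/

open Matrix

section RankOne

variable {ι K : Type*} [Fintype ι] [DecidableEq ι] [CommRing K]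

theorem one_add_vecMulVec_braid {e f v v' w w' : ι → K} {a b : K}
    (hve : v ⬝ᵥ e = -(1 + a)) (hvf : v ⬝ᵥ f = 1) (hwe : w ⬝ᵥ e = a)
    (hwe' : w' ⬝ᵥ e = b) (hwf' : w' ⬝ᵥ f = -(1 + b)) (hww' : w + a • v' = w' + b • v) :
    (1 + vecMulVec e v) * (1 + vecMulVec f w) * (1 + vecMulVec e v') =
      (1 + vecMulVec f w') * (1 + vecMulVec e v) * (1 + vecMulVec f w) := by
  calc (1 + vecMulVec e v) * (1 + vecMulVec f w) * (1 + vecMulVec e v')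
      = 1 + vecMulVec e (v + w) + vecMulVec f (w + a • v') := by
        simp only [mul_add, add_mul, mul_one, one_mul, vecMulVec_mul_vecMulVec, smul_mul_assoc,
          vecMulVec_smul, vecMulVec_add, hve, hvf, hwe]
        module
    _ = 1 + vecMulVec e (v + w) + vecMulVec f (w' + b • v) := by rw [hww']
    _ = (1 + vecMulVec f w') * (1 + vecMulVec e v) * (1 + vecMulVec f w) := by
        simp only [mul_add, add_mul, mul_one, one_mul, vecMulVec_mul_vecMulVec, smul_mul_assoc,
          vecMulVec_smul, vecMulVec_add, hvf, hwe', hwf']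
        module

end RankOne

section BurauMatrix

variable {K L : Type*} [CommRing K] [CommRing L] {n : ℕ}

/-- The `k`-th row of the Burau matrix with parameter `u`, minus the `k`-th row of the identity:
`u e_{k-1} - (1 + u) e_k + e_{k+1}`, where basis vectors with an index out of range are dropped. -/
def burauRow (u : K) (k : Fin n) : Fin n → K := fun c =>
  if (c : ℕ) = k then -(1 + u)
  else if (c : ℕ) = k + 1 then 1
  else if (c : ℕ) + 1 = k then u
  else 0

/-- The Burau matrix with parameter `u` in (0-based) row `k`, written as a rank-one perturbation
of the identity. -/
def burauMatrix (u : K) (k : Fin n) : Matrix (Fin n) (Fin n) K :=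
  1 + vecMulVec (Pi.single k 1) (burauRow u k)

theorem map_burauMatrix (f : K →+* L) (u : K) (k : Fin n) :
    (burauMatrix u k).map f = burauMatrix (f u) k := by
  ext r c
  simp only [burauMatrix, burauRow, map_apply, Matrix.add_apply, one_apply, vecMulVec_apply,
    Pi.single_apply]
  split_ifs <;> simp

theorem burauRow_add_smul_comm {i j : Fin n} (hij : (i : ℕ) + 1 = j) (a b : K) :
    burauRow a j + a • burauRow b i = burauRow b j + b • burauRow a i := by
  ext c
  simp only [burauRow, Pi.add_apply, Pi.smul_apply, smul_eq_mul]
  split_ifs <;> first | omega | ring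

theorem burauMatrix_braid {i j : Fin n} (hij : (i : ℕ) + 1 = j) (a b : K) :
    burauMatrix a i * burauMatrix a j * burauMatrix b i =
      burauMatrix b j * burauMatrix a i * burauMatrix a j := by
  have row_diag (u : K) (k : Fin n) : burauRow u k ⬝ᵥ Pi.single k 1 = -(1 + u) := by
    simp [burauRow]
  have row_succ (u : K) : burauRow u i ⬝ᵥ Pi.single j 1 = 1 := by
    simp [burauRow, ← hij]
  have row_pred (u : K) : burauRow u j ⬝ᵥ Pi.single i 1 = u := by
    have i_ne_j : (i : ℕ) ≠ j := by omega
    have i_ne_succ_j : (i : ℕ) ≠ j + 1 := by omega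
    simp [burauRow, hij, i_ne_j, i_ne_succ_j]
  exact one_add_vecMulVec_braid (row_diag a i) (row_succ a) (row_pred a) (row_pred b)
    (row_diag b j) (burauRow_add_smul_comm hij a b)

end BurauMatrix

theorem swap_mul_swap_braid {α : Type*} [DecidableEq α] {i j k : α}
    (hij : i ≠ j) (hik : i ≠ k) (hjk : j ≠ k) :
    Equiv.swap i j * Equiv.swap j k * Equiv.swap i j =
      Equiv.swap j k * Equiv.swap i j * Equiv.swap j k := by
  rw [Equiv.swap_mul_swap_mul_swap hij hik, Equiv.swap_comm i j, Equiv.swap_comm j k,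
    Equiv.swap_mul_swap_mul_swap hjk.symm hik.symm, Equiv.swap_comm]

theorem colBurau_eq_burauMatrix (n p : ℕ) {i : ℕ} {k : Fin n} (hk : (k : ℕ) + 1 = i) :
    colBurau n p i = burauMatrix (tvar n p k) k := by
  subst hk
  ext r c
  simp only [colBurau, burauMatrix, burauRow, of_apply, Matrix.add_apply, one_apply,
    vecMulVec_apply, Pi.single_apply, Fin.ext_iff, Nat.add_sub_cancel]
  split_ifs <;> first | omega | ring

theorem permF_tvar (n p : ℕ) (s : Equiv.Perm (Fin n)) (k : Fin n) :
    permF n p s (tvar n p k) = tvar n p (s k) := by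
  simp [permF, tvar]

theorem colored_burau_adjacent_braid_relation_general {K : Type*} [CommRing K] {n : ℕ}
    (t : Fin n → K) (ρ : Equiv.Perm (Fin n) → K →+* K) (hρ : ∀ s k, ρ s (t k) = t (s k))
    (φ : Equiv.Perm (Fin n) →* MulAut (GL (Fin n) K))
    (hφ : ∀ (s : Equiv.Perm (Fin n)) (m : GL (Fin n) K),
      (φ s m : Matrix (Fin n) (Fin n) K) = (m : Matrix (Fin n) (Fin n) K).map (ρ s))
    {i j k : Fin n} (hij : (i : ℕ) + 1 = j) (hjk : (j : ℕ) + 1 = k) {x y : GL (Fin n) K}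
    (hx : (x : Matrix (Fin n) (Fin n) K) = burauMatrix (t i) i)
    (hy : (y : Matrix (Fin n) (Fin n) K) = burauMatrix (t j) j) :
    (⟨x, Equiv.swap i j⟩ : GL (Fin n) K ⋊[φ] Equiv.Perm (Fin n)) *
        ⟨y, Equiv.swap j k⟩ * ⟨x, Equiv.swap i j⟩ =
      ⟨y, Equiv.swap j k⟩ * ⟨x, Equiv.swap i j⟩ * ⟨y, Equiv.swap j k⟩ := by
  have i_ne_j : i ≠ j := Fin.ne_of_val_ne (by omega)
  have i_ne_k : i ≠ k := Fin.ne_of_val_ne (by omega)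
  have j_ne_k : j ≠ k := Fin.ne_of_val_ne (by omega)
  have swap_jk_i : Equiv.swap j k i = i := Equiv.swap_apply_of_ne_of_ne i_ne_j i_ne_k
  refine SemidirectProduct.ext (Units.ext ?_) (swap_mul_swap_braid i_ne_j i_ne_k j_ne_k)
  simp only [SemidirectProduct.mul_left, SemidirectProduct.mul_right, Units.val_mul, hφ, hx, hy,
    map_burauMatrix, hρ, Equiv.Perm.mul_apply, swap_jk_i, Equiv.swap_apply_left,
    Equiv.swap_apply_right]
  exact burauMatrix_braid hij (t i) (t j)

/-- For `n ≥ 2` and `p` a prime, and `1 ≤ i ≤ n-2`, the colored Burau pairs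
`g_i = (x_i(t), s_i)` satisfy the adjacent braid relation
`g_i · g_{i+1} · g_i = g_{i+1} · g_i · g_{i+1}` in `GL(n,F) ⋊ S_n`.
Here `φ` is the action of `S_n` on `GL(n,F)` induced by permuting the variables
(characterized entrywise by `hφ`), `x i ∈ GL(n,F)` is the colored Burau matrix
(characterized by `hx`), and `s_i` is the transposition `(i, i+1)`
(0-indexed: `Equiv.swap ⟨i-1,_⟩ ⟨i,_⟩`). -/
theorem colored_burau_adjacent_braid_relation (n p : ℕ) (hn : 2 ≤ n) (hp : p.Prime)
    (φ : Equiv.Perm (Fin n) →* MulAut (GL (Fin n) (BurauField n p)))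
    (hφ : ∀ (s : Equiv.Perm (Fin n)) (m : GL (Fin n) (BurauField n p)),
      ((φ s m : Matrix (Fin n) (Fin n) (BurauField n p)) =
        (m : Matrix (Fin n) (Fin n) (BurauField n p)).map (permF n p s)))
    (x : ℕ → GL (Fin n) (BurauField n p))
    (hx : ∀ i, 1 ≤ i → i ≤ n - 1 →
      ((x i : Matrix (Fin n) (Fin n) (BurauField n p)) = colBurau n p i))
    (i : ℕ) (h1 : 1 ≤ i) (h2 : i ≤ n - 2) :
    (⟨x i, Equiv.swap ⟨i - 1, by omega⟩ ⟨i, by omega⟩⟩ :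
        GL (Fin n) (BurauField n p) ⋊[φ] Equiv.Perm (Fin n)) *
      ⟨x (i + 1), Equiv.swap ⟨i, by omega⟩ ⟨i + 1, by omega⟩⟩ *
      ⟨x i, Equiv.swap ⟨i - 1, by omega⟩ ⟨i, by omega⟩⟩ =
    (⟨x (i + 1), Equiv.swap ⟨i, by omega⟩ ⟨i + 1, by omega⟩⟩ :
        GL (Fin n) (BurauField n p) ⋊[φ] Equiv.Perm (Fin n)) *
      ⟨x i, Equiv.swap ⟨i - 1, by omega⟩ ⟨i, by omega⟩⟩ *
      ⟨x (i + 1), Equiv.swap ⟨i, by omega⟩ ⟨i + 1, by omega⟩⟩ :=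
  colored_burau_adjacent_braid_relation_general (fun k => tvar n p k)
    (fun s => (permF n p s : BurauField n p →+* BurauField n p)) (permF_tvar n p) φ hφ
    (Nat.sub_add_cancel h1) rfl
    ((hx i h1 (by omega)).trans (colBurau_eq_burauMatrix n p (Nat.sub_add_cancel h1)))
    ((hx (i + 1) (by omega) (by omega)).trans (colBurau_eq_burauMatrix n p rfl))
end

section
/- Shared key correctness of CBKAP: let M and N be groups, let S be a group acting on M by group automorphisms, and let π : M → N be a group homomorphism. Let n_a, n_b ∈ N with n_a n_b = n_b n_a, and let x, y ∈ M ⋊ S with x · y = y · x. Writing 1 for the identity of S and n₀ • (n, s) = (n₀ n, s) for n₀ ∈ N and (n,s) ∈ N × S, Alice's and Bob's computed keys agree: (n_a • ((n_b, 1) ★ y)) ★ x = (n_b • ((n_a, 1) ★ x)) ★ y in N × S. -/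
/-- The `★`-operation of the semidirect product `M ⋊[φ] S` on `N × S` (where `S` acts on
`M` by the automorphisms `φ` and `π : M →* N` is a group homomorphism):
`(n, s₁) ★ (m, s₂) = (n · π(s₁ • m), s₁ s₂)`. -/
def starOp {M N S : Type*} [Group M] [Group N] [Group S]
    (φ : S →* MulAut M) (π : M →* N) (a : N × S) (x : M ⋊[φ] S) : N × S :=
  (a.1 * π (φ a.2 x.left), a.2 * x.right)

/-! The `★`-operation is a right action of `M ⋊[φ] S` on `N × S`, and it commutes with left
translation by `N`. Both keys are therefore `(n_a n_b, 1) ★ (y x)`. -/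

section StarOp

variable {M N S : Type*} [Group M] [Group N] [Group S] (φ : S →* MulAut M) (π : M →* N)

theorem starOp_mul (a : N × S) (x y : M ⋊[φ] S) :
    starOp φ π a (x * y) = starOp φ π (starOp φ π a x) y := by
  simp [starOp, mul_assoc]

theorem starOp_mk_mul_left (n m : N) (s : S) (x : M ⋊[φ] S) :
    starOp φ π (n * m, s) x = (n * (starOp φ π (m, s) x).1, (starOp φ π (m, s) x).2) := by
  simp only [starOp, mul_assoc]

end StarOp

/-- Shared key correctness of CBKAP: if `n_a, n_b ∈ N` commute and `x, y ∈ M ⋊ S`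
commute, then Alice's and Bob's computed keys agree:
`(n_a • ((n_b, 1) ★ y)) ★ x = (n_b • ((n_a, 1) ★ x)) ★ y`, where
`n₀ • (n, s) = (n₀ n, s)`. -/
theorem cbkap_shared_key_correct {M N S : Type*} [Group M] [Group N] [Group S]
    (φ : S →* MulAut M) (π : M →* N)
    (na nb : N) (hab : na * nb = nb * na)
    (x y : M ⋊[φ] S) (hxy : x * y = y * x) :
    starOp φ π (na * (starOp φ π (nb, 1) y).1, (starOp φ π (nb, 1) y).2) x =
    starOp φ π (nb * (starOp φ π (na, 1) x).1, (starOp φ π (na, 1) x).2) y := by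
  calc
    _ = starOp φ π (starOp φ π (na * nb, 1) y) x := by rw [starOp_mk_mul_left φ π na nb]
    _ = starOp φ π (na * nb, 1) (y * x) := (starOp_mul φ π _ y x).symm
    _ = starOp φ π (nb * na, 1) (x * y) := by rw [hab, hxy]
    _ = starOp φ π (starOp φ π (nb * na, 1) x) y := starOp_mul φ π _ x y
    _ = _ := by rw [starOp_mk_mul_left φ π nb na]
end

section
/- Let n ≥ 2, let Δ ∈ B_n be the half twist, and let ℓ be the geodesic length function on B_n. For every u ∈ B_n and every integer p ≥ 1, ℓ(Δ^{2p}·u) − ℓ(Δ^{2(p−1)}·u) ≥ n·(n−1) − 2·ℓ(u). -/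
/-- The braid relations on `n` strands: generators are indexed by `Fin (n-1)`
(index `i : Fin (n-1)` corresponds to the Artin generator `σ_{i+1}`), with relations
`σ_i σ_j σ_i = σ_j σ_i σ_j` for `|i-j| = 1` and `σ_i σ_j = σ_j σ_i` for `|i-j| > 1`. -/
def braidRels (n : ℕ) : Set (FreeGroup (Fin (n - 1))) :=
  {r | ∃ i j : Fin (n - 1),
    (((i : ℤ) - (j : ℤ)).natAbs = 1 ∧
      r = FreeGroup.of i * FreeGroup.of j * FreeGroup.of i *
          (FreeGroup.of j * FreeGroup.of i * FreeGroup.of j)⁻¹) ∨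
    (1 < ((i : ℤ) - (j : ℤ)).natAbs ∧
      r = FreeGroup.of i * FreeGroup.of j * (FreeGroup.of j * FreeGroup.of i)⁻¹)}

/-- The braid group `B_n` on `n` strands, presented by the Artin generators and the
braid relations. -/
abbrev BraidGroup (n : ℕ) : Type := PresentedGroup (braidRels n)

/-- The Artin generator `σ_{i+1}` of the braid group `B_n` (so `braidGen n ⟨i-1,_⟩`
is the paper's `σ_i`, `1 ≤ i ≤ n-1`). -/
def braidGen (n : ℕ) (i : Fin (n - 1)) : BraidGroup n := PresentedGroup.of i

/-- The half twist `Δ = (σ_1⋯σ_{n-1})·(σ_1⋯σ_{n-2})·⋯·(σ_1) ∈ B_n`. -/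
def halfTwist (n : ℕ) : BraidGroup n :=
  (List.ofFn fun r : Fin (n - 1) =>
    (List.ofFn fun c : Fin (n - 1 - (r : ℕ)) =>
      braidGen n ⟨(c : ℕ), by have := c.isLt; omega⟩).prod).prod

/-- The geodesic length `ℓ(g)` of a braid `g ∈ B_n`: the length of a shortest word over
the alphabet `{σ_1^{±1}, …, σ_{n-1}^{±1}}` representing `g`. -/
noncomputable def geodesicLength (n : ℕ) (g : BraidGroup n) : ℕ :=
  sInf {k | ∃ L : List (BraidGroup n), L.length = k ∧
    (∀ a ∈ L, ∃ i : Fin (n - 1), a = braidGen n i ∨ a = (braidGen n i)⁻¹) ∧ L.prod = g}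

/-!
The exponent sum `e : B_n → ℤ` sends every generator to `1`, so `|e| ≤ ℓ`, with equality on positive
braids. As `Δ` is positive and `e(Δ²) = n(n-1)`, the lower bound
`ℓ(Δ^{2p}u) ≥ e(Δ^{2p}u) = p·n(n-1) + e(u) ≥ p·n(n-1) - ℓ(u)` and the upper bound
`ℓ(Δ^{2(p-1)}u) ≤ ℓ(Δ^{2(p-1)}) + ℓ(u) = (p-1)·n(n-1) + ℓ(u)` differ by `n(n-1) - 2ℓ(u)`.
-/

section WordLength

variable {G : Type*} [Group G] {S : Set G}

/-- The word length of `g` with respect to `S`: the least length of a word in the elements of `S`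
and their inverses with product `g`. It is the junk value `0` outside the subgroup generated
by `S`. -/
noncomputable def wordLength (S : Set G) (g : G) : ℕ :=
  sInf {k | ∃ L : List G, L.length = k ∧ (∀ a ∈ L, a ∈ S ∨ a⁻¹ ∈ S) ∧ L.prod = g}

theorem wordLength_prod_le_length {L : List G} (hL : ∀ a ∈ L, a ∈ S ∨ a⁻¹ ∈ S) :
    wordLength S L.prod ≤ L.length :=
  Nat.sInf_le ⟨L, rfl, hL, rfl⟩

theorem wordLength_one : wordLength S 1 = 0 := by
  simpa using wordLength_prod_le_length (S := S) (L := []) (by simp)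

theorem wordLength_le_one_of_mem {s : G} (hs : s ∈ S) : wordLength S s ≤ 1 := by
  simpa using wordLength_prod_le_length (L := [s]) (by simp [hs])

theorem exists_list_length_eq_wordLength {g : G} (hg : g ∈ Subgroup.closure S) :
    ∃ L : List G, L.length = wordLength S g ∧ (∀ a ∈ L, a ∈ S ∨ a⁻¹ ∈ S) ∧ L.prod = g := by
  rw [← Subgroup.mem_toSubmonoid, Subgroup.closure_toSubmonoid] at hg
  obtain ⟨L, hL, hprod⟩ := Submonoid.exists_list_of_mem_closure hg
  exact Nat.sInf_mem (s := {k | ∃ L : List G, L.length = k ∧ _}) ⟨L.length, L, rfl, hL, hprod⟩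

theorem wordLength_mul_le {g h : G} (hg : g ∈ Subgroup.closure S) (hh : h ∈ Subgroup.closure S) :
    wordLength S (g * h) ≤ wordLength S g + wordLength S h := by
  obtain ⟨L, hLlen, hL, rfl⟩ := exists_list_length_eq_wordLength hg
  obtain ⟨M, hMlen, hM, rfl⟩ := exists_list_length_eq_wordLength hh
  rw [← hLlen, ← hMlen, ← List.prod_append, ← List.length_append]
  exact wordLength_prod_le_length fun a ha => (List.mem_append.1 ha).elim (hL a) (hM a)

variable {e : G →* Multiplicative ℤ}

theorem abs_toAdd_map_list_prod_le_length (he : ∀ s ∈ S, |(e s).toAdd| ≤ 1) {L : List G}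
    (hL : ∀ a ∈ L, a ∈ S ∨ a⁻¹ ∈ S) : |(e L.prod).toAdd| ≤ L.length := by
  induction L with
  | nil => simp
  | cons a L ih =>
    rw [List.forall_mem_cons] at hL
    have letter_le : |(e a).toAdd| ≤ 1 := by
      rcases hL.1 with ha | ha
      · exact he a ha
      · simpa using he a⁻¹ ha
    calc |(e (a :: L).prod).toAdd|
        = |(e a).toAdd + (e L.prod).toAdd| := by rw [List.prod_cons, map_mul, toAdd_mul]
      _ ≤ |(e a).toAdd| + |(e L.prod).toAdd| := abs_add_le _ _
      _ ≤ 1 + L.length := add_le_add letter_le (ih hL.2)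
      _ = (a :: L).length := by rw [List.length_cons]; push_cast; ring

theorem abs_toAdd_map_le_wordLength (he : ∀ s ∈ S, |(e s).toAdd| ≤ 1) {g : G}
    (hg : g ∈ Subgroup.closure S) : |(e g).toAdd| ≤ wordLength S g := by
  obtain ⟨L, hlen, hL, rfl⟩ := exists_list_length_eq_wordLength hg
  rw [← hlen]
  exact abs_toAdd_map_list_prod_le_length he hL

theorem wordLength_le_toAdd_map_of_mem_closure (he : ∀ s ∈ S, 1 ≤ (e s).toAdd) {g : G}
    (hg : g ∈ Submonoid.closure S) : (wordLength S g : ℤ) ≤ (e g).toAdd := by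
  induction hg using Submonoid.closure_induction with
  | mem s hs => exact (Nat.cast_le_one.2 (wordLength_le_one_of_mem hs)).trans (he s hs)
  | one => simp [wordLength_one]
  | mul g h hg hh ihg ihh =>
    have hle := Subgroup.le_closure_toSubmonoid S
    calc (wordLength S (g * h) : ℤ)
        ≤ wordLength S g + wordLength S h := mod_cast wordLength_mul_le (hle hg) (hle hh)
      _ ≤ (e g).toAdd + (e h).toAdd := add_le_add ihg ihh
      _ = (e (g * h)).toAdd := by rw [map_mul, toAdd_mul]

theorem toAdd_map_sub_two_mul_wordLength_le (he : ∀ s ∈ S, (e s).toAdd = 1) {g h u : G}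
    (hg : g ∈ Subgroup.closure S) (hh : h ∈ Submonoid.closure S) (hu : u ∈ Subgroup.closure S) :
    (e g).toAdd - 2 * wordLength S u ≤
      (wordLength S (g * h * u) : ℤ) - wordLength S (h * u) := by
  have he_abs : ∀ s ∈ S, |(e s).toAdd| ≤ 1 := fun s hs => by rw [he s hs, abs_one]
  have hh' : h ∈ Subgroup.closure S := Subgroup.le_closure_toSubmonoid S hh
  have lower : (e g).toAdd + (e h).toAdd + (e u).toAdd ≤ wordLength S (g * h * u) := by
    rw [← toAdd_mul, ← toAdd_mul, ← map_mul, ← map_mul]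
    exact (le_abs_self _).trans
      (abs_toAdd_map_le_wordLength he_abs (mul_mem (mul_mem hg hh') hu))
  have upper : (wordLength S (h * u) : ℤ) ≤ (e h).toAdd + wordLength S u := by
    have hle : (wordLength S (h * u) : ℤ) ≤ wordLength S h + wordLength S u :=
      mod_cast wordLength_mul_le hh' hu
    linarith [wordLength_le_toAdd_map_of_mem_closure (fun s hs => (he s hs).ge) hh]
  have lower_u : -(wordLength S u : ℤ) ≤ (e u).toAdd :=
    (abs_le.1 (abs_toAdd_map_le_wordLength he_abs hu)).1
  linarith

end WordLength

section Braid

variable (n : ℕ)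

theorem closure_range_braidGen : Subgroup.closure (Set.range (braidGen n)) = ⊤ :=
  PresentedGroup.closure_range_of (braidRels n)

theorem geodesicLength_eq_wordLength (g : BraidGroup n) :
    geodesicLength n g = wordLength (Set.range (braidGen n)) g := by
  have letter_iff (a : BraidGroup n) : (∃ i, a = braidGen n i ∨ a = (braidGen n i)⁻¹) ↔
      a ∈ Set.range (braidGen n) ∨ a⁻¹ ∈ Set.range (braidGen n) := by
    simp only [Set.mem_range, exists_or, eq_comm (a := a), inv_eq_iff_eq_inv]
  simp only [geodesicLength, wordLength, letter_iff]

/-- The exponent sum of a braid, the homomorphism to the integers sending every Artin generator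
to `1`; its codomain is written multiplicatively. -/
def exponentSum : BraidGroup n →* Multiplicative ℤ :=
  PresentedGroup.toGroup (f := fun _ => Multiplicative.ofAdd 1) <| by
    rintro r ⟨i, j, ⟨-, rfl⟩ | ⟨-, rfl⟩⟩ <;> simp

theorem exponentSum_braidGen (i : Fin (n - 1)) :
    exponentSum n (braidGen n i) = Multiplicative.ofAdd 1 :=
  PresentedGroup.toGroup.of _

theorem halfTwist_mem_closure_range_braidGen :
    halfTwist n ∈ Submonoid.closure (Set.range (braidGen n)) := by
  refine Submonoid.list_prod_mem _ (List.forall_mem_ofFn_iff.2 fun r => ?_)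
  exact Submonoid.list_prod_mem _ (List.forall_mem_ofFn_iff.2 fun c =>
    Submonoid.subset_closure (Set.mem_range_self _))

theorem toAdd_exponentSum_halfTwist :
    (exponentSum n (halfTwist n)).toAdd = ∑ r ∈ Finset.range (n - 1), ((n - 1 - r : ℕ) : ℤ) := by
  simp only [halfTwist, map_list_prod, List.map_ofFn, Function.comp_def, exponentSum_braidGen,
    List.prod_ofFn, toAdd_prod, toAdd_ofAdd, Finset.sum_const, Finset.card_univ, Fintype.card_fin,
    nsmul_eq_mul, mul_one]
  exact Fin.sum_univ_eq_sum_range (fun r => ((n - 1 - r : ℕ) : ℤ)) (n - 1)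

theorem sum_range_pred_sub_mul_two :
    (∑ r ∈ Finset.range (n - 1), (n - 1 - r)) * 2 = n * (n - 1) := by
  rw [← Finset.sum_range_id_mul_two]
  cases n with
  | zero => rfl
  | succ m =>
    rw [← Finset.sum_flip, Finset.sum_range_succ, Nat.sub_self, add_zero, Nat.add_sub_cancel]

theorem toAdd_exponentSum_halfTwist_sq :
    (exponentSum n (halfTwist n ^ 2)).toAdd = (n * (n - 1) : ℕ) := by
  rw [map_pow, toAdd_pow, toAdd_exponentSum_halfTwist, ← sum_range_pred_sub_mul_two, mul_comm,
    ← Nat.cast_sum, nsmul_eq_mul, ← Nat.cast_mul]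

end Braid

/-- For every `u ∈ B_n` and every integer `p ≥ 1`,
`ℓ(Δ^{2p}·u) − ℓ(Δ^{2(p-1)}·u) ≥ n·(n-1) − 2·ℓ(u)` (as integers). -/
theorem geodesicLength_halfTwist_sq_pow_mul_gap (n : ℕ) (hn : 2 ≤ n)
    (u : BraidGroup n) (p : ℤ) (hp : 1 ≤ p) :
    ((n * (n - 1) : ℕ) : ℤ) - 2 * (geodesicLength n u : ℤ) ≤
      (geodesicLength n (halfTwist n ^ (2 * p) * u) : ℤ) -
        (geodesicLength n (halfTwist n ^ (2 * (p - 1)) * u) : ℤ) := by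
  obtain ⟨q, rfl⟩ : ∃ q : ℕ, p = q + 1 := ⟨(p - 1).toNat, by omega⟩
  have pow_pred : halfTwist n ^ (2 * ((q : ℤ) + 1 - 1)) = halfTwist n ^ (2 * q) := by
    rw [add_sub_cancel_right]
    exact mod_cast zpow_natCast (halfTwist n) (2 * q)
  have pow_split : halfTwist n ^ (2 * ((q : ℤ) + 1)) = halfTwist n ^ 2 * halfTwist n ^ (2 * q) := by
    rw [← pow_add, ← zpow_natCast]
    congr 1
    push_cast
    ring
  have mem_closure (g : BraidGroup n) : g ∈ Subgroup.closure (Set.range (braidGen n)) :=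
    closure_range_braidGen n ▸ Subgroup.mem_top g
  have exponentSum_gen : ∀ s ∈ Set.range (braidGen n), (exponentSum n s).toAdd = 1 :=
    Set.forall_mem_range.2 fun i => by rw [exponentSum_braidGen, toAdd_ofAdd]
  simp only [pow_pred, pow_split, geodesicLength_eq_wordLength, ← toAdd_exponentSum_halfTwist_sq]
  exact toAdd_map_sub_two_mul_wordLength_le exponentSum_gen (mem_closure _)
    (pow_mem (halfTwist_mem_closure_range_braidGen n) _) (mem_closure u)
end
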